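/- arXiv:2103.09756 — 6 statements merged into one kernel-verified Lean document; each statement's English description precedes it below -/
import Mathlib

section
/- In the REPS setting, the dual objective J_D : ℝ^S → ℝ is differentiable, and for all u, w : S → ℝ it satisfies J_D(u) ≤ J_D(w) + ⟨∇J_D(w), u − w⟩ + (|S|+1)·η·(max_s |u_s − w_s|)², where |S| denotes the number of states. In particular J_D is smooth with respect to the ℓ∞ norm with smoothness parameter proportional to (|S|+1)η. -/
/-!
The objective is a linear function plus a log-sum-exp of affine functions of `v`. Writing `u = w + h`
and normalising the weights `exp (η A^w) q` to a probability distribution `p` on `S × A`, one has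
`J_D(u) - J_D(w) - ⟨∇J_D(w), h⟩ = (1/η) (log E_p[exp (η δ)] - η E_p[δ])`, where
`δ_{s,a} = -h_s + γ Σ_{s'} P(s'|s,a) h_{s'}` is the linear part of the advantage. Since `P(·|s,a)` is a
probability distribution and `γ ≤ 1`, `|δ| ≤ 2 ‖h‖_∞`, so Hoeffding's lemma (`sum_mul_exp_le`) bounds
the right-hand side by `(1/η) (2 η ‖h‖_∞)² / 2 = 2 η ‖h‖_∞²`. This is at most
`(|S| + 1) η ‖h‖_∞²` because `|S| ≥ 1`. The gradient enters only through the directional derivative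
`⟨∇J_D(w), h⟩`, which is computed along the line `t ↦ w + t h` (`hasDerivAt_JD_line`).
-/


/-- Advantage function `A^v_{s,a} = r_{s,a} - v_s + γ Σ_{s'} P(s'|s,a) v_{s'}`. -/
noncomputable def Adv {S A : Type*} [Fintype S] (P : S → A → S → ℝ) (r : S → A → ℝ)
    (γ : ℝ) (v : EuclideanSpace ℝ S) (s : S) (a : A) : ℝ :=
  r s a - v s + γ * ∑ s', P s a s' * v s'

/-- REPS dual objective
`J_D(v) = (1-γ) Σ_s μ_s v_s + (1/η) log(Σ_{s,a} exp(η A^v_{s,a}) q_{s,a}) + 1/η`. -/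
noncomputable def JD {S A : Type*} [Fintype S] [Fintype A] (P : S → A → S → ℝ)
    (r : S → A → ℝ) (μ : S → ℝ) (γ : ℝ) (q : S → A → ℝ) (η : ℝ)
    (v : EuclideanSpace ℝ S) : ℝ :=
  (1 - γ) * ∑ s, μ s * v s
    + (1 / η) * Real.log (∑ s, ∑ a, Real.exp (η * Adv P r γ v s a) * q s a) + 1 / η

/-- Hoeffding's lemma for a finitely supported probability distribution `p`. -/
theorem sum_mul_exp_le {ι : Type*} [Fintype ι] (p x : ι → ℝ) (R : ℝ) (hp : ∀ i, 0 ≤ p i)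
    (hp1 : ∑ i, p i = 1) (hx : ∀ i, |x i| ≤ R) :
    ∑ i, p i * Real.exp (x i) ≤ Real.exp (∑ i, p i * x i + R ^ 2 / 2) := by
  let _ : MeasurableSpace ι := ⊤
  have hsum : ∑ i, ENNReal.ofReal (p i) = 1 := by
    rw [← ENNReal.ofReal_sum_of_nonneg fun i _ => hp i, hp1, ENNReal.ofReal_one]
  have hint (f : ι → ℝ) :
      ∫ i, f i ∂(PMF.ofFintype _ hsum).toMeasure = ∑ i, p i * f i := by
    rw [PMF.integral_eq_sum]
    exact Finset.sum_congr rfl fun i _ => by simp [ENNReal.toReal_ofReal (hp i)]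
  have key := (ProbabilityTheory.hasSubgaussianMGF_of_mem_Icc
    (μ := (PMF.ofFintype _ hsum).toMeasure) (X := x) (a := -R) (b := R)
    Measurable.of_discrete.aemeasurable
    (Filter.Eventually.of_forall fun i => abs_le.1 (hx i))).mgf_le 1
  rw [ProbabilityTheory.mgf, hint, hint] at key
  have e : ∑ i, p i * Real.exp (x i)
      = (∑ i, p i * Real.exp (1 * (x i - ∑ i, p i * x i))) * Real.exp (∑ i, p i * x i) := by
    rw [Finset.sum_mul]
    refine Finset.sum_congr rfl fun i _ => ?_
    rw [mul_assoc, ← Real.exp_add]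
    congr 2
    ring
  rw [e, add_comm, Real.exp_add]
  refine mul_le_mul_of_nonneg_right (key.trans_eq ?_) (Real.exp_pos _).le
  congr 1
  push_cast
  rw [Real.norm_eq_abs, div_pow, sq_abs]
  ring

/-- Second-order bound for log-sum-exp with unnormalised weights `c`. -/
theorem log_sum_mul_exp_le {ι : Type*} [Fintype ι] (c x : ι → ℝ) (R : ℝ) (hc : ∀ i, 0 ≤ c i)
    (hZ : 0 < ∑ i, c i) (hx : ∀ i, |x i| ≤ R) :
    Real.log (∑ i, c i * Real.exp (x i))
      ≤ Real.log (∑ i, c i) + (∑ i, c i * x i) / (∑ i, c i) + R ^ 2 / 2 := by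
  have key := sum_mul_exp_le (fun i => c i / ∑ j, c j) x R (fun i => div_nonneg (hc i) hZ.le)
    (by rw [← Finset.sum_div, div_self hZ.ne']) hx
  simp only [div_mul_eq_mul_div, ← Finset.sum_div] at key
  have hpos : 0 < ∑ i, c i * Real.exp (x i) := by
    obtain ⟨i, -, hi⟩ := Finset.exists_ne_zero_of_sum_ne_zero hZ.ne'
    exact Finset.sum_pos' (fun j _ => mul_nonneg (hc j) (Real.exp_pos _).le)
      ⟨i, Finset.mem_univ _, mul_pos ((hc i).lt_of_ne' hi) (Real.exp_pos _)⟩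
  have := Real.log_le_log (div_pos hpos hZ) key
  rw [Real.log_exp, Real.log_div hpos.ne' hZ.ne'] at this
  linarith

/-- The linear part `-h_s + γ Σ_{s'} P(s'|s,a) h_{s'}` of the advantage function. -/
noncomputable def advLin {S A : Type*} [Fintype S] (P : S → A → S → ℝ) (γ : ℝ)
    (h : EuclideanSpace ℝ S) (s : S) (a : A) : ℝ :=
  -h s + γ * ∑ s', P s a s' * h s'

theorem Adv_add_smul {S A : Type*} [Fintype S] (P : S → A → S → ℝ) (r : S → A → ℝ) (γ t : ℝ)
    (w h : EuclideanSpace ℝ S) (s : S) (a : A) :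
    Adv P r γ (w + t • h) s a = Adv P r γ w s a + t * advLin P γ h s a := by
  simp only [Adv, advLin, PiLp.add_apply, PiLp.smul_apply, smul_eq_mul, mul_add,
    Finset.sum_add_distrib]
  rw [show ∑ s', P s a s' * (t * h s') = t * ∑ s', P s a s' * h s' by
    rw [Finset.mul_sum]; exact Finset.sum_congr rfl fun _ _ => by ring]
  ring

theorem abs_advLin_le {S A : Type*} [Fintype S] (P : S → A → S → ℝ)
    (hP0 : ∀ s a s', 0 ≤ P s a s') (hP1 : ∀ s a, ∑ s', P s a s' = 1)
    (γ : ℝ) (hγ0 : 0 ≤ γ) (hγ1 : γ ≤ 1) (h : EuclideanSpace ℝ S) (M : ℝ)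
    (hM : ∀ s, |h s| ≤ M) (s : S) (a : A) : |advLin P γ h s a| ≤ 2 * M := by
  have hE : |∑ s', P s a s' * h s'| ≤ M := by
    calc |∑ s', P s a s' * h s'| ≤ ∑ s', |P s a s' * h s'| := Finset.abs_sum_le_sum_abs _ _
      _ ≤ ∑ s', P s a s' * M := Finset.sum_le_sum fun s' _ => by
          rw [abs_mul, abs_of_nonneg (hP0 s a s')]
          exact mul_le_mul_of_nonneg_left (hM s') (hP0 s a s')
      _ = M := by rw [← Finset.sum_mul, hP1, one_mul]
  calc |advLin P γ h s a| ≤ |(-h s)| + |γ * ∑ s', P s a s' * h s'| := abs_add_le _ _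
    _ ≤ M + 1 * M := by
        rw [abs_neg, abs_mul, abs_of_nonneg hγ0]
        exact add_le_add (hM s) (mul_le_mul hγ1 hE (abs_nonneg _) zero_le_one)
    _ = 2 * M := by ring

theorem sum_exp_Adv_pos {S A : Type*} [Fintype S] [Fintype A] [Nonempty S] [Nonempty A]
    (P : S → A → S → ℝ) (r : S → A → ℝ) (γ : ℝ) (q : S → A → ℝ) (hq : ∀ s a, 0 < q s a) (η : ℝ)
    (v : EuclideanSpace ℝ S) : 0 < ∑ s, ∑ a, Real.exp (η * Adv P r γ v s a) * q s a :=
  Finset.sum_pos (fun s _ => Finset.sum_pos (fun a _ => mul_pos (Real.exp_pos _) (hq s a))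
    Finset.univ_nonempty) Finset.univ_nonempty

theorem differentiable_JD {S A : Type*} [Fintype S] [Fintype A] [Nonempty S] [Nonempty A]
    (P : S → A → S → ℝ) (r : S → A → ℝ) (μ : S → ℝ) (γ : ℝ)
    (q : S → A → ℝ) (hq : ∀ s a, 0 < q s a) (η : ℝ) :
    Differentiable ℝ (JD P r μ γ q η) := by
  have hZ := sum_exp_Adv_pos P r γ q hq η
  have hZd : Differentiable ℝ fun v : EuclideanSpace ℝ S =>
      ∑ s, ∑ a, Real.exp (η * Adv P r γ v s a) * q s a := by
    unfold Adv; fun_prop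
  unfold JD
  have hlog := hZd.log fun v => (hZ v).ne'
  fun_prop

/-- The derivative of the dual objective along a line: the log-sum-exp term contributes the mean of
`advLin P γ h` under the distribution proportional to `exp (η A^w) q`. -/
theorem hasDerivAt_JD_line {S A : Type*} [Fintype S] [Fintype A] [Nonempty S] [Nonempty A]
    (P : S → A → S → ℝ) (r : S → A → ℝ) (μ : S → ℝ) (γ : ℝ)
    (q : S → A → ℝ) (hq : ∀ s a, 0 < q s a) (η : ℝ) (hη : η ≠ 0) (w h : EuclideanSpace ℝ S) :
    HasDerivAt (fun t : ℝ => JD P r μ γ q η (w + t • h))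
      ((1 - γ) * ∑ s, μ s * h s
        + (∑ s, ∑ a, Real.exp (η * Adv P r γ w s a) * q s a * advLin P γ h s a)
          / ∑ s, ∑ a, Real.exp (η * Adv P r γ w s a) * q s a) 0 := by
  have hZ := sum_exp_Adv_pos P r γ q hq η w
  have hexp : HasDerivAt
      (fun t : ℝ => ∑ s, ∑ a,
        Real.exp (η * (Adv P r γ w s a + t * advLin P γ h s a)) * q s a)
      (η * ∑ s, ∑ a, Real.exp (η * Adv P r γ w s a) * q s a * advLin P γ h s a) 0 := by
    simp only [Finset.mul_sum]
    refine HasDerivAt.fun_sum fun s _ => HasDerivAt.fun_sum fun a _ => ?_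
    have := (((((hasDerivAt_id (0 : ℝ)).mul_const (advLin P γ h s a)).const_add
      (Adv P r γ w s a)).const_mul η).exp).mul_const (q s a)
    refine this.congr_deriv ?_
    simp only [id, zero_mul, add_zero]
    ring
  have hlin : HasDerivAt (fun t : ℝ => ∑ s, μ s * (w s + t * h s)) (∑ s, μ s * h s) 0 := by
    refine HasDerivAt.fun_sum fun s _ => ?_
    have := (((hasDerivAt_id (0 : ℝ)).mul_const (h s)).const_add (w s)).const_mul (μ s)
    exact this.congr_deriv (by ring)
  have := ((hlin.const_mul (1 - γ)).add
    ((hexp.log (by simpa using hZ.ne')).const_mul (1 / η))).add_const (1 / η)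
  simp only [JD, Adv_add_smul, PiLp.add_apply, PiLp.smul_apply, smul_eq_mul]
  refine this.congr_deriv ?_
  simp only [zero_mul, add_zero]
  field_simp

/-- the REPS dual objective `J_D` is differentiable and
`(|S|+1)·η`-smooth with respect to the `ℓ∞` norm. -/
theorem stmt_2 {S A : Type*} [Fintype S] [Fintype A] [Nonempty S] [Nonempty A]
    (P : S → A → S → ℝ) (hP0 : ∀ s a s', 0 ≤ P s a s') (hP1 : ∀ s a, ∑ s', P s a s' = 1)
    (r : S → A → ℝ) (hr : ∀ s a, 0 ≤ r s a ∧ r s a ≤ 1)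
    (μ : S → ℝ) (hμ0 : ∀ s, 0 ≤ μ s) (hμ1 : ∑ s, μ s = 1)
    (γ : ℝ) (hγ : 0 < γ ∧ γ < 1)
    (β : ℝ) (hβ : 0 < β)
    (q : S → A → ℝ) (hq : ∀ s a, β ≤ q s a) (hq1 : ∑ s, ∑ a, q s a = 1)
    (η : ℝ) (hη : 0 < η) :
    ∃ g : EuclideanSpace ℝ S → EuclideanSpace ℝ S,
      (∀ w, HasGradientAt (JD P r μ γ q η) (g w) w) ∧
      ∀ u w : EuclideanSpace ℝ S,
        JD P r μ γ q η u ≤ JD P r μ γ q η w + (∑ s, g w s * (u s - w s))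
          + ((Fintype.card S : ℝ) + 1) * η * (⨆ s, |u s - w s|) ^ 2 := by
  have hq0 : ∀ s a, 0 < q s a := fun s a => hβ.trans_le (hq s a)
  have hd := differentiable_JD P r μ γ q hq0 η
  refine ⟨gradient (JD P r μ γ q η), fun w => (hd w).hasGradientAt, fun u w => ?_⟩
  set h : EuclideanSpace ℝ S := u - w with hh
  set M : ℝ := ⨆ s, |u s - w s| with hMdef
  have hM : ∀ s, |h s| ≤ M := fun s =>
    le_ciSup (f := fun s => |u s - w s|) (Set.finite_range _).bddAbove s
  have hgrad : ∑ s, gradient (JD P r μ γ q η) w s * (u s - w s)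
      = (1 - γ) * ∑ s, μ s * h s
        + (∑ s, ∑ a, Real.exp (η * Adv P r γ w s a) * q s a * advLin P γ h s a)
          / ∑ s, ∑ a, Real.exp (η * Adv P r γ w s a) * q s a := by
    have hline : HasDerivAt (fun t : ℝ => JD P r μ γ q η (w + t • h))
        (fderiv ℝ (JD P r μ γ q η) w h) 0 := (hd w).hasFDerivAt.hasLineDerivAt h
    rw [← hline.unique (hasDerivAt_JD_line P r μ γ q hq0 η hη.ne' w h), ← inner_gradient_left,
      PiLp.inner_apply]
    exact Finset.sum_congr rfl fun s _ => by simp [hh, mul_comm]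
  have hu : u = w + (1 : ℝ) • h := by rw [one_smul, hh, add_sub_cancel]
  have hlse := log_sum_mul_exp_le
    (fun i : S × A => Real.exp (η * Adv P r γ w i.1 i.2) * q i.1 i.2)
    (fun i => η * advLin P γ h i.1 i.2) (η * (2 * M))
    (fun i => (mul_pos (Real.exp_pos _) (hq0 _ _)).le)
    (by rw [Fintype.sum_prod_type]; exact sum_exp_Adv_pos P r γ q hq0 η w)
    (fun i => by
      rw [abs_mul, abs_of_pos hη]
      exact mul_le_mul_of_nonneg_left
        (abs_advLin_le P hP0 hP1 γ hγ.1.le hγ.2.le h M hM i.1 i.2) hη.le)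
  simp only [Fintype.sum_prod_type] at hlse
  have e1 : ∑ s, ∑ a, Real.exp (η * Adv P r γ w s a) * q s a * Real.exp (η * advLin P γ h s a)
      = ∑ s, ∑ a, Real.exp (η * Adv P r γ u s a) * q s a := by
    refine Finset.sum_congr rfl fun s _ => Finset.sum_congr rfl fun a _ => ?_
    rw [hu, Adv_add_smul, one_mul, mul_add, Real.exp_add]
    ring
  have e2 : ∑ s, ∑ a, Real.exp (η * Adv P r γ w s a) * q s a * (η * advLin P γ h s a)
      = η * ∑ s, ∑ a, Real.exp (η * Adv P r γ w s a) * q s a * advLin P γ h s a := by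
    simp only [Finset.mul_sum]
    exact Finset.sum_congr rfl fun s _ => Finset.sum_congr rfl fun a _ => by ring
  have e3 : ∑ s, μ s * u s = ∑ s, μ s * w s + ∑ s, μ s * h s := by
    rw [← Finset.sum_add_distrib]
    exact Finset.sum_congr rfl fun s _ => by simp [hh]; ring
  rw [e1, e2, mul_div_assoc] at hlse
  have hlse' := mul_le_mul_of_nonneg_left hlse (one_div_pos.2 hη).le
  rw [mul_add, mul_add, ← mul_assoc (1 / η) η, one_div_mul_cancel hη.ne', one_mul,
    show 1 / η * ((η * (2 * M)) ^ 2 / 2) = 2 * η * M ^ 2 by field_simp] at hlse'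
  have hcard : 2 * η * M ^ 2 ≤ ((Fintype.card S : ℝ) + 1) * η * M ^ 2 := by
    have : (1 : ℝ) ≤ Fintype.card S := by exact_mod_cast Fintype.card_pos (α := S)
    gcongr
    linarith
  rw [hgrad]
  unfold JD
  rw [e3]
  linarith
end

section
/- In the REPS setting, let λ* ∈ Λ be a maximizer of λ ↦ Σ_{s,a} λ_{s,a} r_{s,a} over Λ, let λ*_η ∈ Λ be a maximizer of J_P over Λ, and let λ₁ ∈ Λ satisfy J_P(λ₁) ≥ J_P(λ*_η) − ε/2 for some ε > 0. Then Σ_{s,a} λ₁_{s,a} r_{s,a} ≥ Σ_{s,a} λ*_{s,a} r_{s,a} − (2/η)·log(|S||A|/β) − ε/2. In particular, if additionally η ≥ (4/ε)·log(|S||A|/β) and |S||A| ≥ 2, then Σ_{s,a} λ₁_{s,a} r_{s,a} ≥ Σ_{s,a} λ*_{s,a} r_{s,a} − ε. -/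
/-!
Each regularized objective equals the return minus `(KL(l ‖ q) - 1) / η`, so the constant `1 / η`
cancels when two feasible points are compared. Chaining `JP lamstar ≤ JP lamreg ≤ JP lam1 + ε / 2`
bounds the loss in return by `(KL(lamstar ‖ q) - KL(lam1 ‖ q)) / η + ε / 2`. Gibbs' inequality
(`kl_nonneg`) discards the second divergence, and the lower bound `β ≤ q` gives
`KL(lamstar ‖ q) ≤ log (1 / β) ≤ log (|S||A| / β)` (`kl_le`). The factor `2` in the
statement is slack.
-/

/-- The feasible set `Λ` of normalized discounted state-action visitation measures. -/
def Feasible {S A : Type*} [Fintype S] [Fintype A] (P : S → A → S → ℝ) (μ : S → ℝ)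
    (γ : ℝ) : Set (S → A → ℝ) :=
  {l | (∀ s a, 0 ≤ l s a) ∧ (∑ s, ∑ a, l s a = 1) ∧
    ∀ s, ∑ a, l s a = (1 - γ) * μ s + γ * ∑ s', ∑ a, P s' a s * l s' a}

/-- The KL-regularized primal objective. -/
noncomputable def JP {S A : Type*} [Fintype S] [Fintype A] (r q : S → A → ℝ) (η : ℝ)
    (l : S → A → ℝ) : ℝ :=
  ∑ s, ∑ a, l s a * r s a - (1 / η) * ∑ s, ∑ a, l s a * (Real.log (l s a / q s a) - 1)

/-- Gibbs' inequality, from the pointwise bound `x - y ≤ x * log (x / y)`. -/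
lemma kl_nonneg {S A : Type*} [Fintype S] [Fintype A] {l q : S → A → ℝ}
    (hl : ∀ s a, 0 ≤ l s a) (hl1 : ∑ s, ∑ a, l s a = 1)
    (hq : ∀ s a, 0 < q s a) (hq1 : ∑ s, ∑ a, q s a = 1) :
    0 ≤ ∑ s, ∑ a, l s a * Real.log (l s a / q s a) := by
  have key : ∀ s a, l s a - q s a ≤ l s a * Real.log (l s a / q s a) := by
    intro s a
    rcases (hl s a).eq_or_lt with h | h
    · rw [← h]; simpa using (hq s a).le
    · have h1 := Real.one_sub_inv_le_log_of_pos (div_pos h (hq s a))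
      have h2 := mul_le_mul_of_nonneg_left h1 h.le
      have h3 : l s a * (1 - (l s a / q s a)⁻¹) = l s a - q s a := by
        rw [inv_div]; field_simp
      linarith
  calc (0 : ℝ) = ∑ s, ∑ a, (l s a - q s a) := by
        simp only [Finset.sum_sub_distrib, hl1, hq1, sub_self]
    _ ≤ _ := Finset.sum_le_sum fun s _ => Finset.sum_le_sum fun a _ => key s a

/-- The likelihood ratio satisfies `l / q ≤ 1 / β` pointwise, which bounds the divergence. -/
lemma kl_le {S A : Type*} [Fintype S] [Fintype A] {l q : S → A → ℝ} {β : ℝ}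
    (hl : ∀ s a, 0 ≤ l s a) (hl1 : ∑ s, ∑ a, l s a = 1)
    (hβ : 0 < β) (hq : ∀ s a, β ≤ q s a) :
    ∑ s, ∑ a, l s a * Real.log (l s a / q s a) ≤ Real.log (1 / β) := by
  have hle : ∀ s a, l s a ≤ 1 := by
    intro s a
    calc l s a ≤ ∑ a, l s a :=
          Finset.single_le_sum (fun a _ => hl s a) (Finset.mem_univ a)
      _ ≤ ∑ s, ∑ a, l s a :=
          Finset.single_le_sum (f := fun s => ∑ a, l s a)
            (fun s _ => Finset.sum_nonneg fun a _ => hl s a) (Finset.mem_univ s)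
      _ = 1 := hl1
  calc _ ≤ ∑ s, ∑ a, l s a * Real.log (1 / β) := by
        refine Finset.sum_le_sum fun s _ => Finset.sum_le_sum fun a _ => ?_
        rcases (hl s a).eq_or_lt with h | h
        · simp [← h]
        · refine mul_le_mul_of_nonneg_left (Real.log_le_log ?_ ?_) h.le
          · exact div_pos h (hβ.trans_le (hq s a))
          · exact div_le_div₀ zero_le_one (hle s a) hβ (hq s a)
    _ = Real.log (1 / β) := by simp only [← Finset.sum_mul, hl1, one_mul]

/-- For a normalized `l`, the `-1` inside the regularizer contributes the constant `1 / η`. -/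
lemma JP_eq {S A : Type*} [Fintype S] [Fintype A] {l : S → A → ℝ} (r q : S → A → ℝ) (η : ℝ)
    (hl1 : ∑ s, ∑ a, l s a = 1) :
    JP r q η l = ∑ s, ∑ a, l s a * r s a
      - (1 / η) * (∑ s, ∑ a, l s a * Real.log (l s a / q s a) - 1) := by
  simp only [JP, mul_sub, mul_one, Finset.sum_sub_distrib, hl1]

/-- an almost-maximizer of the regularized primal objective is also an
almost-maximizer of the unregularized return, up to an extra `(2/η)·log(|S||A|/β)` term;
for `η ≥ (4/ε)·log(|S||A|/β)` this gives an `ε`-optimal return. -/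
theorem stmt_8 {S A : Type*} [Fintype S] [Fintype A] [Nonempty S] [Nonempty A]
    (P : S → A → S → ℝ) (hP0 : ∀ s a s', 0 ≤ P s a s') (hP1 : ∀ s a, ∑ s', P s a s' = 1)
    (r : S → A → ℝ) (hr : ∀ s a, 0 ≤ r s a ∧ r s a ≤ 1)
    (μ : S → ℝ) (hμ0 : ∀ s, 0 ≤ μ s) (hμ1 : ∑ s, μ s = 1)
    (γ : ℝ) (hγ : 0 < γ ∧ γ < 1)
    (β : ℝ) (hβ : 0 < β)
    (q : S → A → ℝ) (hq : ∀ s a, β ≤ q s a) (hq1 : ∑ s, ∑ a, q s a = 1)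
    (η : ℝ) (hη : 0 < η)
    (lamstar : S → A → ℝ) (hstar_mem : lamstar ∈ Feasible P μ γ)
    (hstar_max : ∀ l ∈ Feasible P μ γ,
      ∑ s, ∑ a, l s a * r s a ≤ ∑ s, ∑ a, lamstar s a * r s a)
    (lamreg : S → A → ℝ) (hreg_mem : lamreg ∈ Feasible P μ γ)
    (hreg_max : ∀ l ∈ Feasible P μ γ, JP r q η l ≤ JP r q η lamreg)
    (lam1 : S → A → ℝ) (h1_mem : lam1 ∈ Feasible P μ γ)
    (ε : ℝ) (hε : 0 < ε)
    (h1_opt : JP r q η lamreg - ε / 2 ≤ JP r q η lam1) :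
    (∑ s, ∑ a, lamstar s a * r s a
        - (2 / η) * Real.log ((Fintype.card S : ℝ) * (Fintype.card A : ℝ) / β) - ε / 2
      ≤ ∑ s, ∑ a, lam1 s a * r s a) ∧
    ((4 / ε) * Real.log ((Fintype.card S : ℝ) * (Fintype.card A : ℝ) / β) ≤ η →
      2 ≤ Fintype.card S * Fintype.card A →
      ∑ s, ∑ a, lamstar s a * r s a - ε ≤ ∑ s, ∑ a, lam1 s a * r s a) := by
  have hq0 : ∀ s a, 0 < q s a := fun s a => hβ.trans_le (hq s a)
  have hKL1 := kl_nonneg h1_mem.1 h1_mem.2.1 hq0 hq1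
  have hKLs := kl_le hstar_mem.1 hstar_mem.2.1 hβ hq
  have hKLs0 := kl_nonneg hstar_mem.1 hstar_mem.2.1 hq0 hq1
  have hJ := (hreg_max _ hstar_mem).trans (sub_le_iff_le_add.mp h1_opt)
  rw [JP_eq r q η hstar_mem.2.1, JP_eq r q η h1_mem.2.1] at hJ
  have hcard : (1 : ℝ) ≤ (Fintype.card S : ℝ) * (Fintype.card A : ℝ) := by
    exact_mod_cast Nat.mul_pos (Fintype.card_pos (α := S)) (Fintype.card_pos (α := A))
  have hlog : Real.log (1 / β)
      ≤ Real.log ((Fintype.card S : ℝ) * (Fintype.card A : ℝ) / β) :=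
    Real.log_le_log (by positivity) (by gcongr)
  set L := Real.log ((Fintype.card S : ℝ) * (Fintype.card A : ℝ) / β)
  set Ks := ∑ s, ∑ a, lamstar s a * Real.log (lamstar s a / q s a)
  set K1 := ∑ s, ∑ a, lam1 s a * Real.log (lam1 s a / q s a)
  have hη' : 0 < 1 / η := by positivity
  have e1 : 1 / η * (Ks - K1) ≤ 1 / η * (2 * L) :=
    mul_le_mul_of_nonneg_left (by linarith) hη'.le
  have e2 : 2 / η * L = 1 / η * (2 * L) := by ring
  have main : ∑ s, ∑ a, lamstar s a * r s a - (2 / η) * L - ε / 2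
      ≤ ∑ s, ∑ a, lam1 s a * r s a := by
    rw [e2]; linarith
  refine ⟨main, fun hηL _ => ?_⟩
  have e3 : 2 / η * L ≤ ε / 2 := by
    rw [div_mul_eq_mul_div, div_le_iff₀ hη]
    rw [div_mul_eq_mul_div, div_le_iff₀ hε] at hηL
    linarith
  linarith
end

section
/- Let ε ∈ (0, 1/2), let n ≥ 1, and let C, Ĉ ∈ ℝ^n and b, b̂ ∈ ℝ^n with b_i > 0 and b̂_i > 0 for all i. Suppose max_i |Ĉ_i − C_i| ≤ ε and |b̂_i − b_i| ≤ ε·b_i for all i. Define B_i = exp(C_i)/Z with Z = Σ_j exp(C_j)·b_j, and B̂_i = exp(Ĉ_i)/Ẑ with Ẑ = Σ_j exp(Ĉ_j)·b̂_j. Then |B̂_i − B_i| ≤ 38·ε·B_i for every i. -/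
/-!
Put `q = 1 - ε` and call two positive numbers `q`-close if each is at least `q` times the other.
From `1 - ε ≤ exp (-ε)` the numerators `exp (C i)` and `exp (C' i)` are `q`-close, and so are the
weights, since `(1 - ε) * (1 + ε) ≤ 1`. Summing the products, the two normalizing constants are
`q ^ 2`-close, hence the softmax entries are `q ^ 3`-close. The bound then follows from
`1 - 3 * ε ≤ q ^ 3` and from `1 ≤ q ^ 3 * (1 + 14 * ε)`, valid for `ε` in `[0, 1 / 2]`.
-/

/-- If `x` exceeds `y` by at most `ε`, then `exp y` is at least `1 - ε` times `exp x`. -/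
lemma one_sub_mul_exp_le {ε x y : ℝ} (h : x - y ≤ ε) :
    (1 - ε) * Real.exp x ≤ Real.exp y := by
  have h1 : 1 - ε ≤ Real.exp (y - x) := by linarith [Real.add_one_le_exp (y - x)]
  calc (1 - ε) * Real.exp x ≤ Real.exp (y - x) * Real.exp x := by gcongr
    _ = Real.exp y := by rw [← Real.exp_add]; congr 1; ring

lemma sq_mul_sum_le {n : ℕ} {q : ℝ} (hq : 0 ≤ q) {x y u v : Fin n → ℝ}
    (hy : ∀ i, 0 ≤ y i) (hu : ∀ i, 0 ≤ u i)
    (hxy : ∀ i, q * x i ≤ y i) (huv : ∀ i, q * u i ≤ v i) :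
    q ^ 2 * ∑ j, x j * u j ≤ ∑ j, y j * v j := by
  rw [Finset.mul_sum]
  refine Finset.sum_le_sum fun j _ => ?_
  calc q ^ 2 * (x j * u j) = (q * x j) * (q * u j) := by ring
    _ ≤ y j * v j := mul_le_mul (hxy j) (huv j) (mul_nonneg hq (hu j)) (hy j)

lemma cube_mul_div_le {q x y X Y : ℝ} (hy : 0 ≤ y) (hX : 0 < X) (hY : 0 < Y)
    (hxy : q * x ≤ y) (hYX : q ^ 2 * Y ≤ X) : q ^ 3 * (x / X) ≤ y / Y := by
  rw [← mul_div_assoc, div_le_div_iff₀ hX hY]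
  calc q ^ 3 * x * Y = (q * x) * (q ^ 2 * Y) := by ring
    _ ≤ y * X := mul_le_mul hxy hYX (by positivity) hy

/-- stability of weighted softmax vectors: entrywise perturbations of size
`ε` in the exponents and relative size `ε` in the weights change each softmax entry by a
relative factor of at most `38ε`. -/
theorem stmt_10 (n : ℕ) (hn : 1 ≤ n) (ε : ℝ) (hε0 : 0 < ε) (hε : ε < 1 / 2)
    (C C' b b' : Fin n → ℝ)
    (hb : ∀ i, 0 < b i) (hb' : ∀ i, 0 < b' i)
    (hC : ∀ i, |C' i - C i| ≤ ε)
    (hbb : ∀ i, |b' i - b i| ≤ ε * b i) :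
    ∀ i, |Real.exp (C' i) / (∑ j, Real.exp (C' j) * b' j)
        - Real.exp (C i) / (∑ j, Real.exp (C j) * b j)|
      ≤ 38 * ε * (Real.exp (C i) / (∑ j, Real.exp (C j) * b j)) := by
  have hq : 0 < 1 - ε := by linarith
  have hne : (Finset.univ : Finset (Fin n)).Nonempty := ⟨⟨0, hn⟩, Finset.mem_univ _⟩
  have hZ : 0 < ∑ j, Real.exp (C j) * b j :=
    Finset.sum_pos (fun j _ => mul_pos (Real.exp_pos _) (hb j)) hne
  have hZ' : 0 < ∑ j, Real.exp (C' j) * b' j :=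
    Finset.sum_pos (fun j _ => mul_pos (Real.exp_pos _) (hb' j)) hne
  have e1 : ∀ j, (1 - ε) * Real.exp (C j) ≤ Real.exp (C' j) := fun j =>
    one_sub_mul_exp_le (by linarith [(abs_le.mp (hC j)).1])
  have e2 : ∀ j, (1 - ε) * Real.exp (C' j) ≤ Real.exp (C j) := fun j =>
    one_sub_mul_exp_le (abs_le.mp (hC j)).2
  have w1 : ∀ j, (1 - ε) * b j ≤ b' j := fun j => by linarith [(abs_le.mp (hbb j)).1]
  have w2 : ∀ j, (1 - ε) * b' j ≤ b j := fun j => by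
    have h : b' j ≤ (1 + ε) * b j := by linarith [(abs_le.mp (hbb j)).2]
    calc (1 - ε) * b' j ≤ (1 - ε) * ((1 + ε) * b j) := by gcongr
      _ = b j - ε ^ 2 * b j := by ring
      _ ≤ b j := sub_le_self _ (mul_nonneg (sq_nonneg ε) (hb j).le)
  have s1 := sq_mul_sum_le hq.le (fun j => (Real.exp_pos (C' j)).le) (fun j => (hb j).le) e1 w1
  have s2 := sq_mul_sum_le hq.le (fun j => (Real.exp_pos (C j)).le) (fun j => (hb' j).le) e2 w2
  intro i
  have r1 := cube_mul_div_le (Real.exp_pos (C' i)).le hZ hZ' (e1 i) s2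
  have r2 := cube_mul_div_le (Real.exp_pos (C i)).le hZ' hZ (e2 i) s1
  have hB : 0 < Real.exp (C i) / ∑ j, Real.exp (C j) * b j := div_pos (Real.exp_pos _) hZ
  have hB' : 0 < Real.exp (C' i) / ∑ j, Real.exp (C' j) * b' j := div_pos (Real.exp_pos _) hZ'
  generalize Real.exp (C i) / ∑ j, Real.exp (C j) * b j = B at *
  generalize Real.exp (C' i) / ∑ j, Real.exp (C' j) * b' j = B' at *
  have lo : 1 - 3 * ε ≤ (1 - ε) ^ 3 := by
    have : 0 ≤ ε ^ 2 * (3 - ε) := mul_nonneg (sq_nonneg ε) (by linarith)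
    linarith
  -- The difference of the two sides vanishes at `0` and `1 / 2`, which gives the factorization.
  have up : 1 ≤ (1 - ε) ^ 3 * (1 + 14 * ε) := by
    have : 0 ≤ ε * (1 - 2 * ε) * (11 - 17 * ε + 7 * ε ^ 2) :=
      mul_nonneg (mul_nonneg hε0.le (by linarith)) (by linarith [sq_nonneg ε])
    linarith
  have hεB : 0 < ε * B := mul_pos hε0 hB
  have hlow : (1 - 3 * ε) * B ≤ B' := (mul_le_mul_of_nonneg_right lo hB.le).trans r1
  have hup : B' ≤ (1 + 14 * ε) * B :=
    calc B' ≤ (1 - ε) ^ 3 * (1 + 14 * ε) * B' := le_mul_of_one_le_left hB'.le up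
      _ = (1 + 14 * ε) * ((1 - ε) ^ 3 * B') := by ring
      _ ≤ (1 + 14 * ε) * B := by gcongr
  rw [abs_le]
  constructor <;> linarith
end

section
/- In the REPS setting, suppose J_D attains its infimum over ℝ^S. If ṽ : S → ℝ satisfies J_D(ṽ) ≤ inf_v J_D(v) + ε for some ε ≥ 0, then the ℓ1 norm of the gradient satisfies Σ_s |(∇J_D(ṽ))_s| ≤ 2√((|S|+1)·η·ε), where |S| is the number of states. -/
open MeasureTheory ProbabilityTheory in
/-- Hoeffding's lemma for a finitely supported distribution `p` and values in `[-c, c]`. -/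
lemma sum_exp_le_of_abs_le {ι : Type*} [Fintype ι] (p x : ι → ℝ) (c : ℝ)
    (hp : ∀ i, 0 ≤ p i) (hp1 : ∑ i, p i = 1) (hx : ∀ i, |x i| ≤ c) :
    ∑ i, p i * Real.exp (x i) ≤ Real.exp (∑ i, p i * x i + c ^ 2 / 2) := by
  let _ : MeasurableSpace ι := ⊤
  let ν : Measure ι := ∑ i, ENNReal.ofReal (p i) • Measure.dirac i
  have hint : ∀ f : ι → ℝ, ∫ i, f i ∂ν = ∑ i, p i * f i := by
    intro f
    rw [integral_finsetSum_measure (fun i _ =>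
      (integrable_dirac (by simp)).smul_measure ENNReal.ofReal_ne_top)]
    refine Finset.sum_congr rfl fun i _ => ?_
    rw [integral_smul_measure, integral_dirac, ENNReal.toReal_ofReal (hp i), smul_eq_mul]
  have : IsProbabilityMeasure ν := ⟨by
    simp only [ν, Measure.coe_finsetSum, Finset.sum_apply, Measure.smul_apply, measure_univ,
      smul_eq_mul, mul_one]
    rw [← ENNReal.ofReal_sum_of_nonneg (fun i _ => hp i), hp1, ENNReal.ofReal_one]⟩
  have h := (hasSubgaussianMGF_of_mem_Icc (μ := ν) (X := x) (a := -c) (b := c)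
    (Measurable.aemeasurable fun _ _ => trivial)
    (Filter.Eventually.of_forall fun i => abs_le.mp (hx i))).mgf_le 1
  have hc : (((‖c - -c‖₊ / 2) ^ 2 : NNReal) : ℝ) = c ^ 2 := by
    push_cast
    rw [Real.norm_eq_abs, div_pow, sq_abs]
    ring
  simp only [mgf, hint, hc, one_mul, one_pow, mul_one] at h
  have h2 : ∑ i, p i * Real.exp (x i)
      = Real.exp (∑ i, p i * x i) * ∑ i, p i * Real.exp (x i - ∑ j, p j * x j) := by
    rw [Finset.mul_sum]
    refine Finset.sum_congr rfl fun i _ => ?_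
    rw [mul_left_comm, ← Real.exp_add]
    ring_nf
  rw [h2, Real.exp_add]
  exact mul_le_mul_of_nonneg_left h (Real.exp_pos _).le

/-- A log-sum-exp function on a line exceeds its tangent at `0` by at most `t² c² / 2`. The slope
`m` is the mean of `a` under the distribution proportional to the weights `Q`. -/
lemma logSumExp_quadratic_bound {ι : Type*} [Fintype ι] [Nonempty ι] (Q a : ι → ℝ) (c : ℝ)
    (hQ : ∀ i, 0 < Q i) (ha : ∀ i, |a i| ≤ c) :
    ∃ m, HasDerivAt (fun t : ℝ => Real.log (∑ i, Q i * Real.exp (t * a i))) m 0 ∧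
      ∀ t : ℝ, Real.log (∑ i, Q i * Real.exp (t * a i))
        ≤ Real.log (∑ i, Q i) + t * m + t ^ 2 * c ^ 2 / 2 := by
  have hZ : 0 < ∑ i, Q i := Finset.sum_pos (fun i _ => hQ i) Finset.univ_nonempty
  refine ⟨(∑ i, Q i * a i) / ∑ i, Q i, ?_, fun t => ?_⟩
  · have h1 : HasDerivAt (fun t : ℝ => ∑ i, Q i * Real.exp (t * a i)) (∑ i, Q i * a i) 0 := by
      refine HasDerivAt.fun_sum fun i _ => ?_
      have := (((hasDerivAt_id (0 : ℝ)).mul_const (a i)).exp).const_mul (Q i)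
      simpa using this
    have h2 := h1.log (by simpa using hZ.ne')
    simpa using h2
  · have h := sum_exp_le_of_abs_le (fun i => Q i / ∑ j, Q j) (fun i => t * a i) (|t| * c)
      (fun i => (div_pos (hQ i) hZ).le) (by rw [← Finset.sum_div, div_self hZ.ne'])
      (fun i => by rw [abs_mul]; exact mul_le_mul_of_nonneg_left (ha i) (abs_nonneg t))
    have e1 : ∑ i, Q i / (∑ j, Q j) * Real.exp (t * a i)
        = (∑ i, Q i * Real.exp (t * a i)) / ∑ j, Q j := by
      rw [Finset.sum_div]
      exact Finset.sum_congr rfl fun i _ => by ring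
    have e2 : ∑ i, Q i / (∑ j, Q j) * (t * a i) = t * ((∑ i, Q i * a i) / ∑ j, Q j) := by
      rw [Finset.sum_div, Finset.mul_sum]
      exact Finset.sum_congr rfl fun i _ => by ring
    have hW : 0 < ∑ i, Q i * Real.exp (t * a i) :=
      Finset.sum_pos (fun i _ => mul_pos (hQ i) (Real.exp_pos _)) Finset.univ_nonempty
    rw [e1, e2, ← Real.log_le_iff_le_exp (div_pos hW hZ), Real.log_div hW.ne' hZ.ne', mul_pow,
      sq_abs] at h
    linarith

/-- `J_D` is `4η`-smooth with respect to the sup norm, stated along a direction `w` with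
`‖w‖_∞ ≤ 1`. -/
lemma JD_line_le {S A : Type*} [Fintype S] [Fintype A] [Nonempty S] [Nonempty A]
    (P : S → A → S → ℝ) (hP0 : ∀ s a s', 0 ≤ P s a s') (hP1 : ∀ s a, ∑ s', P s a s' = 1)
    (r : S → A → ℝ) (μ : S → ℝ) (γ : ℝ) (hγ : 0 < γ ∧ γ < 1)
    (q : S → A → ℝ) (hq : ∀ s a, 0 < q s a) (η : ℝ) (hη : 0 < η)
    (v w d : EuclideanSpace ℝ S) (hd : HasGradientAt (JD P r μ γ q η) d v)
    (hw : ∀ s, |w s| ≤ 1) (t : ℝ) :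
    JD P r μ γ q η (v + t • w) ≤ JD P r μ γ q η v + t * inner ℝ d w + 2 * η * t ^ 2 := by
  let a : S × A → ℝ := fun i => η * (-w i.1 + γ * ∑ s', P i.1 i.2 s' * w s')
  let Q : S × A → ℝ := fun i => Real.exp (η * Adv P r γ v i.1 i.2) * q i.1 i.2
  have ha : ∀ i, |a i| ≤ 2 * η := by
    intro i
    have h1 : |∑ s', P i.1 i.2 s' * w s'| ≤ 1 := by
      rw [← hP1 i.1 i.2]
      refine (Finset.abs_sum_le_sum_abs _ _).trans (Finset.sum_le_sum fun s' _ => ?_)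
      rw [abs_mul, abs_of_nonneg (hP0 _ _ _)]
      exact mul_le_of_le_one_right (hP0 _ _ _) (hw s')
    have h2 : |-w i.1 + γ * ∑ s', P i.1 i.2 s' * w s'| ≤ 2 := by
      refine (abs_add_le _ _).trans ?_
      rw [abs_neg, abs_mul, abs_of_pos hγ.1]
      nlinarith [hw i.1, hγ.1, hγ.2, abs_nonneg (∑ s', P i.1 i.2 s' * w s')]
    simp only [a]
    rw [abs_mul, abs_of_pos hη]
    nlinarith
  obtain ⟨m, hm, hbound⟩ := logSumExp_quadratic_bound Q a (2 * η)
    (fun i => mul_pos (Real.exp_pos _) (hq _ _)) ha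
  have hJ : ∀ t : ℝ, JD P r μ γ q η (v + t • w) = (1 - γ) * ∑ s, μ s * v s
      + t * ((1 - γ) * ∑ s, μ s * w s)
      + (1 / η) * Real.log (∑ i, Q i * Real.exp (t * a i)) + 1 / η := by
    intro t
    have e1 : ∑ s, μ s * (v + t • w) s = ∑ s, μ s * v s + t * ∑ s, μ s * w s := by
      rw [Finset.mul_sum, ← Finset.sum_add_distrib]
      exact Finset.sum_congr rfl fun s _ => by simp; ring
    have e2 : ∑ s, ∑ b, Real.exp (η * Adv P r γ (v + t • w) s b) * q s b
        = ∑ i, Q i * Real.exp (t * a i) := by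
      rw [Fintype.sum_prod_type]
      refine Finset.sum_congr rfl fun s _ => Finset.sum_congr rfl fun b _ => ?_
      have e3 : ∑ s', P s b s' * (v + t • w) s'
          = ∑ s', P s b s' * v s' + t * ∑ s', P s b s' * w s' := by
        rw [Finset.mul_sum, ← Finset.sum_add_distrib]
        exact Finset.sum_congr rfl fun s' _ => by simp; ring
      have e4 : η * Adv P r γ (v + t • w) s b = η * Adv P r γ v s b + t * a (s, b) := by
        simp only [Adv, a]
        rw [e3]
        simp only [PiLp.add_apply, PiLp.smul_apply, smul_eq_mul]
        ring
      rw [e4, Real.exp_add]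
      simp only [Q]
      ring
    simp only [JD, e1, e2]
    ring
  -- The slope at `t = 0` is computed twice: from the gradient and from the explicit formula.
  have hder1 : HasDerivAt (fun t : ℝ => JD P r μ γ q η (v + t • w)) (inner ℝ d w) 0 := by
    have hline : HasDerivAt (fun t : ℝ => v + t • w) w 0 := by
      simpa using ((hasDerivAt_id (0 : ℝ)).smul_const w).const_add v
    have hF : HasFDerivAt (JD P r μ γ q η) (InnerProductSpace.toDual ℝ _ d)
        (v + (0 : ℝ) • w) := by simpa using hd.hasFDerivAt
    exact hF.comp_hasDerivAt (0 : ℝ) hline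
  have hder2 : HasDerivAt (fun t : ℝ => JD P r μ γ q η (v + t • w))
      ((1 - γ) * ∑ s, μ s * w s + (1 / η) * m) 0 := by
    simp only [hJ]
    have := (((((hasDerivAt_id (0 : ℝ)).mul_const ((1 - γ) * ∑ s, μ s * w s)).const_add
      ((1 - γ) * ∑ s, μ s * v s)).add (hm.const_mul (1 / η))).add_const (1 / η))
    simpa using this
  have hJ0 := hJ 0
  simp only [zero_smul, add_zero, zero_mul, Real.exp_zero, mul_one] at hJ0
  rw [hder1.unique hder2, hJ t, hJ0]
  have hb := mul_le_mul_of_nonneg_left (hbound t) (one_div_pos.mpr hη).le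
  have e5 : 1 / η * (Real.log (∑ i, Q i) + t * m + t ^ 2 * (2 * η) ^ 2 / 2)
      = 1 / η * Real.log (∑ i, Q i) + t * (1 / η * m) + 2 * η * t ^ 2 := by
    field_simp
  rw [e5] at hb
  linarith

/-- if the REPS dual objective attains its infimum and `ṽ` is `ε`-optimal
for it, then the ℓ1 norm of the gradient of `J_D` at `ṽ` is at most `2√((|S|+1)ηε)`. -/
theorem stmt_12 {S A : Type*} [Fintype S] [Fintype A] [Nonempty S] [Nonempty A]
    (P : S → A → S → ℝ) (hP0 : ∀ s a s', 0 ≤ P s a s') (hP1 : ∀ s a, ∑ s', P s a s' = 1)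
    (r : S → A → ℝ) (hr : ∀ s a, 0 ≤ r s a ∧ r s a ≤ 1)
    (μ : S → ℝ) (hμ0 : ∀ s, 0 ≤ μ s) (hμ1 : ∑ s, μ s = 1)
    (γ : ℝ) (hγ : 0 < γ ∧ γ < 1)
    (β : ℝ) (hβ : 0 < β)
    (q : S → A → ℝ) (hq : ∀ s a, β ≤ q s a) (hq1 : ∑ s, ∑ a, q s a = 1)
    (η : ℝ) (hη : 0 < η)
    (g : EuclideanSpace ℝ S → EuclideanSpace ℝ S)
    (hgrad : ∀ v, HasGradientAt (JD P r μ γ q η) (g v) v)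
    (hattain : ∃ vm : EuclideanSpace ℝ S, ∀ v, JD P r μ γ q η vm ≤ JD P r μ γ q η v)
    (ε : ℝ) (hε : 0 ≤ ε)
    (vt : EuclideanSpace ℝ S) (hopt : ∀ v, JD P r μ γ q η vt ≤ JD P r μ γ q η v + ε) :
    ∑ s, |g vt s| ≤ 2 * Real.sqrt (((Fintype.card S : ℝ) + 1) * η * ε) := by
  set G : ℝ := ∑ s, |g vt s| with hG
  let w : EuclideanSpace ℝ S := WithLp.toLp 2 fun s => -(SignType.sign (g vt s) : ℝ)
  have hw : ∀ s, |w s| ≤ 1 := by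
    intro s
    simp only [w]
    rcases lt_trichotomy (g vt s) 0 with h | h | h <;> simp [h]
  have hinner : inner ℝ (g vt) w = -G := by
    rw [PiLp.inner_apply, hG, ← Finset.sum_neg_distrib]
    refine Finset.sum_congr rfl fun s _ => ?_
    simp [w, sign_mul_self]
  have h1 := JD_line_le P hP0 hP1 r μ γ hγ q (fun s a => hβ.trans_le (hq s a)) η hη vt w (g vt)
    (hgrad vt) hw (G / (4 * η))
  have h2 := hopt (vt + (G / (4 * η)) • w)
  rw [hinner] at h1
  have h3 : G / (4 * η) * -G + 2 * η * (G / (4 * η)) ^ 2 = -(G ^ 2 / (8 * η)) := by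
    field_simp
    ring
  have h4 : G ^ 2 / (8 * η) ≤ ε := by linarith
  rw [div_le_iff₀ (by positivity)] at h4
  have hcard : (1 : ℝ) ≤ Fintype.card S := by exact_mod_cast Fintype.card_pos
  have h5 : (G / 2) ^ 2 ≤ ((Fintype.card S : ℝ) + 1) * η * ε := by
    nlinarith [mul_nonneg (sub_nonneg.mpr hcard) (mul_nonneg hη.le hε)]
  have h6 := Real.le_sqrt_of_sq_le h5
  linarith
end

section
/- Let α ∈ (1,2], η > 0, n ≥ 1, and let q ∈ ℝ^n with 0 < q_i ≤ 1 for all i. Define F : [0,1]^n → ℝ by F(λ) = (1/(η(α−1)))·(Σ_i λ_i^α / q_i^{α−1} − 1). Then F is (α/η)-strongly convex on [0,1]^n with respect to the Euclidean norm: for all λ, λ' ∈ [0,1]^n, F(λ) ≥ F(λ') + ⟨∇F(λ'), λ − λ'⟩ + (α/(2η))·‖λ − λ'‖₂², where ∇F(λ')_i = (α/(η(α−1)))·(λ'_i)^{α−1}/q_i^{α−1}. -/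
/-!
The claim is a sum of one-variable inequalities. For `x, y ∈ [0,1]` and `1 < α ≤ 2`, the function
`t ↦ t ^ α - α (α - 1) / 2 * t ^ 2` has derivative `α (t ^ (α - 1) - (α - 1) t)`, which is
monotone on `[0,1]` by Bernoulli's inequality. Hence it is convex and lies above its tangents, so
that `x ^ α - y ^ α - α y ^ (α - 1) (x - y) ≥ α (α - 1) / 2 * (x - y) ^ 2`. Since
`0 < q ^ (α - 1) ≤ 1`, dividing the left side (which is nonnegative) by `q ^ (α - 1)` can only
increase it. Summing over the coordinates and dividing by `η (α - 1)` gives the theorem.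
-/

theorem rpow_sub_mul_monotoneOn {b : ℝ} (hb0 : 0 < b) (hb1 : b ≤ 1) :
    MonotoneOn (fun t : ℝ => t ^ b - b * t) (Set.Icc 0 1) := by
  intro s hs t ht hst
  rcases ht.1.eq_or_lt with h0 | h0
  · have : s = t := le_antisymm hst (h0 ▸ hs.1)
    rw [this]
  -- Bernoulli's inequality at `s / t`
  have h1 : (s / t) ^ b ≤ 1 + b * (s / t - 1) := by
    have := rpow_one_add_le_one_add_mul_self (s := s / t - 1)
      (by have := div_nonneg hs.1 ht.1; linarith) hb0.le hb1
    simpa using this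
  have hd : s / t ≤ 1 := (div_le_one h0).2 hst
  rw [Real.div_rpow hs.1 ht.1, div_le_iff₀ (Real.rpow_pos_of_pos h0 b)] at h1
  have h2 : t ≤ t ^ b := by
    simpa using Real.rpow_le_rpow_of_exponent_ge h0 ht.2 hb1
  have h3 : b * (1 - s / t) * t ≤ b * (1 - s / t) * t ^ b :=
    mul_le_mul_of_nonneg_left h2 (mul_nonneg hb0.le (by linarith))
  have h4 : b * (1 - s / t) * t = b * t - b * s := by field_simp
  show s ^ b - b * s ≤ t ^ b - b * t
  nlinarith

/-- Lower bound on the Bregman divergence of `t ↦ t ^ α` on `[0,1]`. -/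
theorem rpow_bregman_ge {α : ℝ} (hα1 : 1 < α) (hα2 : α ≤ 2) {x y : ℝ}
    (hx : x ∈ Set.Icc (0 : ℝ) 1) (hy : y ∈ Set.Icc (0 : ℝ) 1) :
    α * (α - 1) / 2 * (x - y) ^ 2 ≤ x ^ α - y ^ α - α * y ^ (α - 1) * (x - y) := by
  have hder : ∀ t : ℝ, HasDerivAt (fun t : ℝ => t ^ α - α * (α - 1) / 2 * t ^ 2)
      (α * (t ^ (α - 1) - (α - 1) * t)) t := by
    intro t
    have h := (Real.hasDerivAt_rpow_const (x := t) (p := α) (Or.inr hα1.le)).sub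
      ((hasDerivAt_pow 2 t).const_mul (α * (α - 1) / 2))
    refine h.congr_deriv ?_
    push_cast
    ring
  have hmono := rpow_sub_mul_monotoneOn (b := α - 1) (by linarith) (by linarith)
  have hcont : Continuous (fun t : ℝ => t ^ α - α * (α - 1) / 2 * t ^ 2) :=
    continuous_iff_continuousAt.2 fun t => (hder t).continuousAt
  have key : ∀ u v : ℝ, u ∈ Set.Icc (0 : ℝ) 1 → v ∈ Set.Icc (0 : ℝ) 1 → u < v →
      ∃ c ∈ Set.Icc (0 : ℝ) 1, u ≤ c ∧ c ≤ v ∧ α * (c ^ (α - 1) - (α - 1) * c) * (v - u) =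
        (v ^ α - α * (α - 1) / 2 * v ^ 2) - (u ^ α - α * (α - 1) / 2 * u ^ 2) := by
    intro u v hu hv huv
    obtain ⟨c, hc, h⟩ := exists_hasDerivAt_eq_slope _ _ huv hcont.continuousOn
      fun t _ => hder t
    refine ⟨c, ⟨hu.1.trans hc.1.le, hc.2.le.trans hv.2⟩, hc.1.le, hc.2.le, ?_⟩
    rw [h, div_mul_cancel₀ _ (sub_pos.2 huv).ne']
  have tangent : α * (y ^ (α - 1) - (α - 1) * y) * (x - y) ≤
      (x ^ α - α * (α - 1) / 2 * x ^ 2) - (y ^ α - α * (α - 1) / 2 * y ^ 2) := by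
    rcases lt_trichotomy x y with h | h | h
    · obtain ⟨c, hc, -, hcy, e⟩ := key x y hx hy h
      have h1 : c ^ (α - 1) - (α - 1) * c ≤ y ^ (α - 1) - (α - 1) * y := hmono hc hy hcy
      have h2 := mul_le_mul_of_nonneg_right
        (mul_le_mul_of_nonneg_left h1 (by linarith : (0 : ℝ) ≤ α)) (sub_pos.2 h).le
      linarith
    · simp [h]
    · obtain ⟨c, hc, hyc, -, e⟩ := key y x hy hx h
      have h1 : y ^ (α - 1) - (α - 1) * y ≤ c ^ (α - 1) - (α - 1) * c := hmono hy hc hyc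
      have h2 := mul_le_mul_of_nonneg_right
        (mul_le_mul_of_nonneg_left h1 (by linarith : (0 : ℝ) ≤ α)) (sub_pos.2 h).le
      linarith
  linarith

/-- the scaled Tsallis regularizer
`F(λ) = (1/(η(α−1)))·(Σ_i λ_i^α / q_i^{α−1} − 1)` is `(α/η)`-strongly convex on `[0,1]^n`
with respect to the Euclidean norm, with gradient
`∇F(λ')_i = (α/(η(α−1)))·(λ'_i)^{α−1}/q_i^{α−1}`. -/
theorem stmt_15 (n : ℕ) (hn : 1 ≤ n) (α η : ℝ) (hα1 : 1 < α) (hα2 : α ≤ 2) (hη : 0 < η)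
    (q : Fin n → ℝ) (hq0 : ∀ i, 0 < q i) (hq1 : ∀ i, q i ≤ 1)
    (l l' : Fin n → ℝ)
    (hl : ∀ i, 0 ≤ l i ∧ l i ≤ 1) (hl' : ∀ i, 0 ≤ l' i ∧ l' i ≤ 1) :
    (1 / (η * (α - 1))) * (∑ i, l' i ^ α / q i ^ (α - 1) - 1)
      + (∑ i, (α / (η * (α - 1))) * (l' i ^ (α - 1) / q i ^ (α - 1)) * (l i - l' i))
      + (α / (2 * η)) * ∑ i, (l i - l' i) ^ 2
    ≤ (1 / (η * (α - 1))) * (∑ i, l i ^ α / q i ^ (α - 1) - 1) := by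
  have hb : 0 < α - 1 := by linarith
  have hterm : ∀ i, (1 / (η * (α - 1))) * (l' i ^ α / q i ^ (α - 1))
      + (α / (η * (α - 1))) * (l' i ^ (α - 1) / q i ^ (α - 1)) * (l i - l' i)
      + (α / (2 * η)) * (l i - l' i) ^ 2
      ≤ (1 / (η * (α - 1))) * (l i ^ α / q i ^ (α - 1)) := by
    intro i
    have hQ0 : 0 < q i ^ (α - 1) := Real.rpow_pos_of_pos (hq0 i) _
    have hQ1 : q i ^ (α - 1) ≤ 1 := Real.rpow_le_one (hq0 i).le (hq1 i) hb.le
    have hB := rpow_bregman_ge hα1 hα2 (hl i) (hl' i)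
    have hB0 : 0 ≤ α * (α - 1) / 2 * (l i - l' i) ^ 2 := by positivity
    have hdiv := hB.trans (le_div_self (hB0.trans hB) hQ0 hQ1)
    have hmul := mul_le_mul_of_nonneg_left hdiv
      (by positivity : (0 : ℝ) ≤ 1 / (η * (α - 1)))
    have e1 : 1 / (η * (α - 1)) * (α * (α - 1) / 2 * (l i - l' i) ^ 2)
        = (α / (2 * η)) * (l i - l' i) ^ 2 := by
      field_simp
    have e2 : 1 / (η * (α - 1)) *
        ((l i ^ α - l' i ^ α - α * l' i ^ (α - 1) * (l i - l' i)) / q i ^ (α - 1))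
        = (1 / (η * (α - 1))) * (l i ^ α / q i ^ (α - 1))
          - (1 / (η * (α - 1))) * (l' i ^ α / q i ^ (α - 1))
          - (α / (η * (α - 1))) * (l' i ^ (α - 1) / q i ^ (α - 1)) * (l i - l' i) := by
      ring
    linarith
  have hsum := Finset.sum_le_sum fun i (_ : i ∈ Finset.univ) => hterm i
  simp only [Finset.sum_add_distrib, ← Finset.mul_sum] at hsum
  rw [mul_sub (1 / (η * (α - 1))) _ 1, mul_sub (1 / (η * (α - 1))) _ 1]
  linarith
end

section
/- In the Tsallis-REPS setting with order α > 1, let λ* ∈ Λ be a maximizer of λ ↦ Σ_{s,a} λ_{s,a} r_{s,a} over Λ, let λ*_η ∈ Λ be a maximizer of J_P^T over Λ, and let λ₁ ∈ Λ satisfy J_P^T(λ₁) ≥ J_P^T(λ*_η) − ε/2 for some ε > 0. Then Σ_{s,a} λ₁_{s,a} r_{s,a} ≥ Σ_{s,a} λ*_{s,a} r_{s,a} − (1/((α−1)η))·(1/β)^α − ε/2. In particular, if η = 2/((α−1)·ε·β^α), then Σ_{s,a} λ₁_{s,a} r_{s,a} ≥ Σ_{s,a} λ*_{s,a} r_{s,a}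 − ε. -/
/-- The Tsallis regularizer `F_T(λ) = (1/(η(α−1)))·(Σ_{s,a} λ_{s,a}^α / q_{s,a}^{α−1} − 1)`. -/
noncomputable def FT {S A : Type*} [Fintype S] [Fintype A] (q : S → A → ℝ) (η α : ℝ)
    (l : S → A → ℝ) : ℝ :=
  (1 / (η * (α - 1))) * (∑ s, ∑ a, l s a ^ α / q s a ^ (α - 1) - 1)

/-- The Tsallis-regularized primal objective `J_P^T(λ) = Σ λ_{s,a} r_{s,a} − F_T(λ)`. -/
noncomputable def JPT {S A : Type*} [Fintype S] [Fintype A] (r q : S → A → ℝ) (η α : ℝ)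
    (l : S → A → ℝ) : ℝ :=
  ∑ s, ∑ a, l s a * r s a - FT q η α l

/-- Each entry of a nonnegative array is at most its total sum. -/
lemma entry_le_sum {S A : Type*} [Fintype S] [Fintype A] {l : S → A → ℝ}
    (h0 : ∀ s a, 0 ≤ l s a) (s : S) (a : A) : l s a ≤ ∑ s, ∑ a, l s a :=
  (Finset.single_le_sum (fun b _ => h0 s b) (Finset.mem_univ a)).trans
    (Finset.single_le_sum (f := fun t => ∑ a, l t a)
      (fun t _ => Finset.sum_nonneg fun b _ => h0 t b) (Finset.mem_univ s))

lemma tsallisSum_le {S A : Type*} [Fintype S] [Fintype A] {l q : S → A → ℝ} {α β : ℝ}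
    (hα : 1 < α) (hβ : 0 < β) (hβ1 : β ≤ 1) (hq : ∀ s a, β ≤ q s a)
    (h0 : ∀ s a, 0 ≤ l s a) (h1 : ∑ s, ∑ a, l s a = 1) :
    ∑ s, ∑ a, l s a ^ α / q s a ^ (α - 1) ≤ (1 / β) ^ α := by
  have key : ∀ s a, l s a ^ α / q s a ^ (α - 1) ≤ l s a * (1 / β) ^ α := by
    intro s a
    have hl : l s a ^ α ≤ l s a := by
      have hle : l s a ≤ 1 := h1 ▸ entry_le_sum h0 s a
      simpa using Real.rpow_le_rpow_of_exponent_ge_of_imp (h0 s a) hle hα.le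
        (fun _ h => absurd h (by linarith))
    have hqβ : β ^ α ≤ q s a ^ (α - 1) :=
      (Real.rpow_le_rpow_of_exponent_ge hβ hβ1 (by linarith)).trans
        (Real.rpow_le_rpow hβ.le (hq s a) (by linarith))
    rw [one_div, Real.inv_rpow hβ.le, ← div_eq_mul_inv]
    exact div_le_div₀ (h0 s a) hl (Real.rpow_pos_of_pos hβ α) hqβ
  calc ∑ s, ∑ a, l s a ^ α / q s a ^ (α - 1)
      ≤ ∑ s, ∑ a, l s a * (1 / β) ^ α :=
        Finset.sum_le_sum fun s _ => Finset.sum_le_sum fun a _ => key s a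
    _ = (1 / β) ^ α := by simp only [← Finset.sum_mul, h1, one_mul]

/-- an almost-maximizer of the Tsallis-regularized primal objective is also
an almost-maximizer of the unregularized return, up to an extra `(1/((α−1)η))·(1/β)^α`
term; for `η = 2/((α−1)εβ^α)` this gives an `ε`-optimal return. -/
theorem stmt_18 {S A : Type*} [Fintype S] [Fintype A] [Nonempty S] [Nonempty A]
    (P : S → A → S → ℝ) (hP0 : ∀ s a s', 0 ≤ P s a s') (hP1 : ∀ s a, ∑ s', P s a s' = 1)
    (r : S → A → ℝ) (hr : ∀ s a, 0 ≤ r s a ∧ r s a ≤ 1)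
    (μ : S → ℝ) (hμ0 : ∀ s, 0 ≤ μ s) (hμ1 : ∑ s, μ s = 1)
    (γ : ℝ) (hγ : 0 < γ ∧ γ < 1)
    (β : ℝ) (hβ : 0 < β)
    (q : S → A → ℝ) (hq : ∀ s a, β ≤ q s a) (hq1 : ∑ s, ∑ a, q s a = 1)
    (η : ℝ) (hη : 0 < η) (α : ℝ) (hα : 1 < α)
    (lamstar : S → A → ℝ) (hstar_mem : lamstar ∈ Feasible P μ γ)
    (hstar_max : ∀ l ∈ Feasible P μ γ,
      ∑ s, ∑ a, l s a * r s a ≤ ∑ s, ∑ a, lamstar s a * r s a)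
    (lamreg : S → A → ℝ) (hreg_mem : lamreg ∈ Feasible P μ γ)
    (hreg_max : ∀ l ∈ Feasible P μ γ, JPT r q η α l ≤ JPT r q η α lamreg)
    (lam1 : S → A → ℝ) (h1_mem : lam1 ∈ Feasible P μ γ)
    (ε : ℝ) (hε : 0 < ε)
    (h1_opt : JPT r q η α lamreg - ε / 2 ≤ JPT r q η α lam1) :
    (∑ s, ∑ a, lamstar s a * r s a - (1 / ((α - 1) * η)) * (1 / β) ^ α - ε / 2
      ≤ ∑ s, ∑ a, lam1 s a * r s a) ∧
    (η = 2 / ((α - 1) * ε * β ^ α) →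
      ∑ s, ∑ a, lamstar s a * r s a - ε ≤ ∑ s, ∑ a, lam1 s a * r s a) := by
  have hq0 : ∀ s a, 0 ≤ q s a := fun s a => hβ.le.trans (hq s a)
  have hβ1 : β ≤ 1 := by
    obtain ⟨s⟩ := ‹Nonempty S›
    obtain ⟨a⟩ := ‹Nonempty A›
    exact hq1 ▸ (hq s a).trans (entry_le_sum hq0 s a)
  have hα0 : 0 < α - 1 := by linarith
  have hstar_sum := tsallisSum_le hα hβ hβ1 hq hstar_mem.1 hstar_mem.2.1
  have h1_sum : 0 ≤ ∑ s, ∑ a, lam1 s a ^ α / q s a ^ (α - 1) :=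
    Finset.sum_nonneg fun s _ => Finset.sum_nonneg fun a _ =>
      div_nonneg (Real.rpow_nonneg (h1_mem.1 s a) _) (Real.rpow_nonneg (hq0 s a) _)
  have hFT : FT q η α lamstar - FT q η α lam1 ≤ (1 / ((α - 1) * η)) * (1 / β) ^ α := by
    unfold FT
    rw [← mul_sub, mul_comm η]
    exact mul_le_mul_of_nonneg_left (by linarith) (by positivity)
  have hopt := hreg_max lamstar hstar_mem
  have main : ∑ s, ∑ a, lamstar s a * r s a - (1 / ((α - 1) * η)) * (1 / β) ^ α - ε / 2
      ≤ ∑ s, ∑ a, lam1 s a * r s a := by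
    unfold JPT at hopt h1_opt
    linarith
  refine ⟨main, fun hηeq => ?_⟩
  have hbias : (1 / ((α - 1) * η)) * (1 / β) ^ α = ε / 2 := by
    have hβα : 0 < β ^ α := Real.rpow_pos_of_pos hβ α
    rw [hηeq, one_div β, Real.inv_rpow hβ.le]
    field_simp
  linarith
end
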